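/- Let Γ be a finite abelian group of order n ≥ 2 with identity e, and let R, S, T ⊆ Γ satisfy R = R⁻¹, S = S⁻¹ and e ∉ R ∪ S. Then λ₃(SC(Γ; R, S, T)) ≤ (2n)/3, i.e. the third largest adjacency eigenvalue is at most one third of the number of vertices 2n. -/

import Mathlib

/-!
Write `n` for the order of the group. By Courant–Fischer it is enough to find two linear
conditions on `f` under which `⟨f, A f⟩ ≤ (2n/3) ‖f‖²` (`eigen_count_le_two`). The Fourier transform
on the abelian group splits the adjacency form into one `2 × 2` Hermitian block per character `ψ`,
with entries the transforms of the indicators of `R`, `S`, `T` (`card_mul_blockForm`). So the claim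
is that at most two eigenvalues of these blocks, in total, exceed `2n/3`:

* If `ψ² ≠ 1`, no eigenvalue does (`isTame_of_sq_ne_one`). Outside order `4` every entry is at
  most `n/3` in modulus, because `|y| ≤ 2/9 + 11/9 y² - 4/9 y⁴` on `[-1, 1]` and the second and fourth
  moments of `Re (ω ψ)` are `1/2` and `3/8`. At order `4` the diagonal entries are at most `n/4`
  and the off-diagonal one at most `5n/12`.
* If `ψ² = 1` and `ψ ≠ 1`, the diagonal entries are at most `n/2`, so at most one eigenvalue does.
* Among all nontrivial `ψ` at most one has such an eigenvalue (`isTame_or_isTame`): testing two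
  real blocks on unit vectors `(p, q)`, `(p', q')`, the sum of the values is at most
  `n (max(p², p'²)/2 + max(q², q'²)/2 + max(|pq|, |p'q'|)) ≤ 4n/3`.
* If the trivial block has two such eigenvalues, no other block has any
  (`isTame_of_trivial_posDef`).
-/

open Matrix

/-- The list of eigenvalues of a real symmetric matrix, sorted in decreasing order. -/
noncomputable def eigsDesc {V : Type} [Fintype V] [DecidableEq V] (A : Matrix V V ℝ) : List ℝ :=
  if h : A.IsHermitian then
    ((Finset.univ : Finset V).val.map h.eigenvalues).sort (· ≥ ·)
  else []

/-- The `k`-th largest eigenvalue (1-indexed, counted with multiplicity) of a real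
symmetric matrix. -/
noncomputable def lambdaK {V : Type} [Fintype V] [DecidableEq V] (A : Matrix V V ℝ) (k : ℕ) : ℝ :=
  (eigsDesc A).getD (k - 1) 0

/-- `graphLambda G k` is the `k`-th largest adjacency eigenvalue of the graph `G`. -/
noncomputable def graphLambda {V : Type} [Fintype V] [DecidableEq V] (G : SimpleGraph V)
    (k : ℕ) : ℝ :=
  letI := Classical.decRel G.Adj
  lambdaK (G.adjMatrix ℝ) k

/-- The semi-Cayley graph `SC(Γ; R, S, T)` on vertex set `Γ × Bool`
(`false` is the first copy of `Γ`, `true` the second): `(h, 0) ∼ (g, 0)` iff `g * h⁻¹ ∈ R`,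
`(h, 1) ∼ (g, 1)` iff `g * h⁻¹ ∈ S`, and `(h, 0) ∼ (g, 1)` iff `g * h⁻¹ ∈ T`
(for `R`, `S` symmetric not containing the identity, as assumed below). -/
def semiCayleyGraph {Γ : Type} [Group Γ] (R S T : Set Γ) : SimpleGraph (Γ × Bool) :=
  SimpleGraph.fromRel (fun p q =>
    (p.2 = false ∧ q.2 = false ∧ q.1 * p.1⁻¹ ∈ R) ∨
    (p.2 = true ∧ q.2 = true ∧ q.1 * p.1⁻¹ ∈ S) ∨
    (p.2 = false ∧ q.2 = true ∧ q.1 * p.1⁻¹ ∈ T))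

/-! ### Counting large eigenvalues -/

/-- One direction of Courant–Fischer: a quadratic form bounded by `c ‖f‖²` on a subspace of
codimension at most two has at most two eigenvalues above `c`. -/
lemma eigen_count_le_two {V : Type} [Fintype V] [DecidableEq V] {A : Matrix V V ℝ}
    (hA : A.IsHermitian) (c : ℝ) (w₁ w₂ : V → ℝ)
    (h : ∀ f : V → ℝ, f ⬝ᵥ w₁ = 0 → f ⬝ᵥ w₂ = 0 → f ⬝ᵥ (A *ᵥ f) ≤ c * (f ⬝ᵥ f)) :
    Fintype.card {i // c < hA.eigenvalues i} ≤ 2 := by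
  by_contra! hcard
  set b : V → V → ℝ := fun j => ⇑(hA.eigenvectorBasis j) with hb
  have horth : ∀ i j, b i ⬝ᵥ b j = if i = j then 1 else 0 := by
    intro i j
    have := orthonormal_iff_ite.1 hA.eigenvectorBasis.orthonormal j i
    rw [EuclideanSpace.inner_eq_star_dotProduct] at this
    simpa [hb, eq_comm] using this
  have heig : ∀ i, A *ᵥ b i = hA.eigenvalues i • b i := fun i => hA.mulVec_eigenvectorBasis i
  let E : ({i // c < hA.eigenvalues i} → ℝ) →ₗ[ℝ] (V → ℝ) :=
    Fintype.linearCombination ℝ (fun i => b i.1)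
  let L : (V → ℝ) →ₗ[ℝ] ℝ × ℝ :=
    { toFun := fun f => (f ⬝ᵥ w₁, f ⬝ᵥ w₂)
      map_add' := by intro x y; simp [add_dotProduct]
      map_smul' := by intro r x; simp [smul_dotProduct] }
  have hker : LinearMap.ker (L ∘ₗ E) ≠ ⊥ := LinearMap.ker_ne_bot_of_finrank_lt (by simpa using hcard)
  obtain ⟨a, ha, ha0⟩ := (Submodule.ne_bot_iff _).1 hker
  have hE : E a = ∑ i, a i • b i.1 := Fintype.linearCombination_apply ..
  have hL : L (E a) = 0 := ha
  have h1 := h (E a) (congrArg Prod.fst hL) (congrArg Prod.snd hL)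
  have hbE : ∀ i : {i // c < hA.eigenvalues i}, b i.1 ⬝ᵥ E a = a i := by
    intro i
    simp [hE, dotProduct_sum, dotProduct_smul, horth, ← Subtype.ext_iff]
  have e1 : E a ⬝ᵥ E a = ∑ i, a i * a i := by
    conv_lhs => enter [1]; rw [hE]
    simp [sum_dotProduct, smul_dotProduct, hbE]
  have e2 : E a ⬝ᵥ (A *ᵥ E a) = ∑ i, hA.eigenvalues i.1 * (a i * a i) := by
    have : A *ᵥ E a = ∑ i, a i • hA.eigenvalues i.1 • b i.1 := by
      rw [hE, Matrix.mulVec_sum]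
      simp [Matrix.mulVec_smul, heig]
    rw [this, dotProduct_sum]
    refine Finset.sum_congr rfl fun i _ => ?_
    rw [dotProduct_smul, dotProduct_smul, dotProduct_comm, hbE]
    simp only [smul_eq_mul]; ring
  rw [e1, e2, Finset.mul_sum] at h1
  obtain ⟨i, hi⟩ := Function.ne_iff.1 ha0
  refine absurd h1 (not_le.2 (Finset.sum_lt_sum (fun j _ => ?_) ⟨i, Finset.mem_univ _, ?_⟩))
  · exact mul_le_mul_of_nonneg_right j.2.le (mul_self_nonneg _)
  · exact mul_lt_mul_of_pos_right i.2 (mul_self_pos.2 hi)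

lemma lambdaK_three_le {V : Type} [Fintype V] [DecidableEq V] {A : Matrix V V ℝ}
    (hA : A.IsHermitian) (c : ℝ) (hc : 0 ≤ c)
    (h : Fintype.card {i // c < hA.eigenvalues i} ≤ 2) : lambdaK A 3 ≤ c := by
  unfold lambdaK eigsDesc
  rw [dif_pos hA]
  set m := (Finset.univ : Finset V).val.map hA.eigenvalues with hm
  have hcount : (m.sort (· ≥ ·)).countP (fun x => decide (c < x)) ≤ 2 := by
    have : (m.sort (· ≥ ·)).countP (fun x => decide (c < x)) = m.countP (c < ·) := by
      conv_rhs => rw [← Multiset.sort_eq m (· ≥ ·), Multiset.coe_countP]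
    rw [this, hm, Multiset.countP_map]
    rw [Fintype.card_subtype] at h
    exact h
  have hs : (m.sort (· ≥ ·)).Pairwise (· ≥ ·) := Multiset.pairwise_sort m (· ≥ ·)
  generalize m.sort (· ≥ ·) = l at hcount hs
  match l, hcount, hs with
  | [], _, _ => simpa
  | [_], _, _ => simpa
  | [_, _], _, _ => simpa
  | x :: y :: z :: t, hcount, hs =>
    simp only [List.pairwise_cons, List.mem_cons] at hs
    by_contra! hlt
    have hz : c < z := by simpa using hlt
    have hy : c < y := lt_of_lt_of_le hz (hs.2.1 z (Or.inl rfl))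
    have hx : c < x := lt_of_lt_of_le hy (hs.1 y (Or.inl rfl))
    simp [hx, hy, hz] at hcount

/-! ### Fourier bounds for weights in `[0, 1]` -/

/-- The Fourier transform `∑ g, k g ψ(g)` of a real function at the character `ψ`
(with `ψ` itself rather than its conjugate). -/
noncomputable def ft {α : Type} [AddCommGroup α] [Fintype α] (k : α → ℝ) (ψ : AddChar α ℂ) : ℂ :=
  ∑ g, (k g : ℂ) * ψ g

section Fourier
open ComplexConjugate
variable {α : Type} [AddCommGroup α] [Fintype α]

/-- Plancherel for convolution forms: it block-diagonalizes the bilinear form with kernel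
`k (y - x)`. -/
lemma sum_ft_mul (f k h : α → ℝ) :
    ∑ ψ : AddChar α ℂ, ft f ψ * ft k ψ * conj (ft h ψ) =
      ((Fintype.card α * ∑ x, ∑ y, f x * k (y - x) * h y : ℝ) : ℂ) := by
  classical
  have hconj : ∀ (ψ : AddChar α ℂ) y, conj (ψ y) = ψ (-y) := fun ψ y =>
    (ψ.map_neg_eq_conj y).symm
  have h1 : ∀ ψ : AddChar α ℂ, ft f ψ * ft k ψ * conj (ft h ψ) =
      ∑ x, ∑ y, ∑ d, (f x * k d * h y : ℂ) * ψ (x + d - y) := by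
    intro ψ
    simp only [ft, map_sum, map_mul, Complex.conj_ofReal, hconj]
    rw [mul_assoc, Finset.sum_mul]
    refine Finset.sum_congr rfl fun x _ => ?_
    rw [mul_comm (∑ g, _) (∑ g, _), Finset.sum_mul_sum, Finset.mul_sum]
    refine Finset.sum_congr rfl fun y _ => ?_
    rw [Finset.mul_sum]
    refine Finset.sum_congr rfl fun d _ => ?_
    rw [sub_eq_add_neg, ψ.map_add_eq_mul, ψ.map_add_eq_mul]
    ring
  simp only [h1]
  rw [Finset.sum_comm]
  push_cast
  rw [Finset.mul_sum]
  refine Finset.sum_congr rfl fun x _ => ?_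
  rw [Finset.sum_comm, Finset.mul_sum]
  refine Finset.sum_congr rfl fun y _ => ?_
  rw [Finset.sum_comm]
  simp only [← Finset.mul_sum, AddChar.sum_apply_eq_ite]
  rw [Finset.sum_eq_single (y - x)]
  · simp; ring
  · intro d _ hd
    rw [if_neg, mul_zero]
    intro h0; apply hd; rw [eq_sub_iff_add_eq, add_comm]; exact sub_eq_zero.1 h0
  · simp

lemma norm_ft_le (k : α → ℝ) (h0 : ∀ g, 0 ≤ k g) (ψ : AddChar α ℂ) : ‖ft k ψ‖ ≤ ∑ g, k g := by
  refine (norm_sum_le _ _).trans (le_of_eq (Finset.sum_congr rfl fun g _ => ?_))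
  simp [ψ.norm_apply, abs_of_nonneg (h0 g)]

lemma re_mul_ft (k : α → ℝ) (ψ : AddChar α ℂ) (ω : ℂ) :
    (ω * ft k ψ).re = ∑ g, k g * (ω * ψ g).re := by
  rw [ft, Finset.mul_sum, Complex.re_sum]
  refine Finset.sum_congr rfl fun g _ => ?_
  rw [mul_left_comm, Complex.re_ofReal_mul]

lemma sum_re_mul (ψ : AddChar α ℂ) (hψ : ψ ≠ 1) (ω : ℂ) : ∑ g, (ω * ψ g).re = 0 := by
  rw [← Complex.re_sum, ← Finset.mul_sum, AddChar.sum_eq_zero_of_ne_one hψ]; simp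

/-- When `∑ y = 0`, the sum of the positive parts of `y` is half the sum of `|y|`. -/
lemma sum_mul_le_half_abs {ι : Type} [Fintype ι] (k y : ι → ℝ) (h0 : ∀ g, 0 ≤ k g) (h1 : ∀ g, k g ≤ 1)
    (hy : ∑ g, y g = 0) : ∑ g, k g * y g ≤ (∑ g, |y g|) / 2 := by
  have : ∑ g, k g * y g ≤ ∑ g, (|y g| + y g) / 2 := by
    refine Finset.sum_le_sum fun g _ => ?_
    rcases abs_cases (y g) with ⟨h, h'⟩ | ⟨h, h'⟩ <;> rw [h] <;> nlinarith [h0 g, h1 g]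
  rwa [← Finset.sum_div, Finset.sum_add_distrib, hy, add_zero] at this

/-- As `∑ g, ψ g = 0`, the transform of `k` is minus the transform of `1 - k`. -/
lemma re_ft_le_sub (k : α → ℝ) (h1 : ∀ g, k g ≤ 1) (ψ : AddChar α ℂ)
    (hψ : ψ ≠ 1) : (ft k ψ).re ≤ Fintype.card α - ∑ g, k g := by
  have e := re_mul_ft k ψ 1
  have s := sum_re_mul ψ hψ 1
  simp only [one_mul] at e s
  have hle : ∀ g, (ψ g).re ≤ 1 := fun g => (Complex.re_le_norm _).trans (ψ.norm_apply g).le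
  have : ∑ g, (1 - k g) * (-(ψ g).re) ≤ ∑ g, (1 - k g) :=
    Finset.sum_le_sum fun g _ => by
      have := (abs_le.1 ((Complex.abs_re_le_norm (ψ g)).trans (ψ.norm_apply g).le)).1
      nlinarith [h1 g]
  have e2 : ∑ g, (1 - k g) * (-(ψ g).re) = (ft k ψ).re := by
    rw [e]
    have : ∀ g, (1 - k g) * (-(ψ g).re) = k g * (ψ g).re - (ψ g).re := fun g => by ring
    simp only [this, Finset.sum_sub_distrib, s, sub_zero]
  rw [e2] at this
  simpa using this

lemma re_sq_eq (z : ℂ) (hz : ‖z‖ = 1) : z.re ^ 2 = (1 + (z ^ 2).re) / 2 := by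
  have h : z.re * z.re + z.im * z.im = 1 := by
    rw [← Complex.normSq_apply, Complex.normSq_eq_norm_sq, hz]; norm_num
  simp [pow_two]; linarith

lemma sum_re_sq (ψ : AddChar α ℂ) (h2 : ψ ^ 2 ≠ 1) (ω : ℂ) (hω : ‖ω‖ = 1) :
    ∑ g, (ω * ψ g).re ^ 2 = Fintype.card α / 2 := by
  have hn : ∀ g, ‖ω * ψ g‖ = 1 := fun g => by simp [hω, ψ.norm_apply]
  simp only [re_sq_eq _ (hn _), ← Finset.sum_div, Finset.sum_add_distrib, mul_pow]
  have := sum_re_mul (ψ ^ 2) h2 (ω ^ 2)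
  simp only [AddChar.pow_apply] at this
  rw [this]; simp

lemma sum_re_pow_four (ψ : AddChar α ℂ) (h2 : ψ ^ 2 ≠ 1) (h4 : ψ ^ 4 ≠ 1) (ω : ℂ)
    (hω : ‖ω‖ = 1) : ∑ g, (ω * ψ g).re ^ 4 = 3 * Fintype.card α / 8 := by
  have hn : ∀ g, ‖ω * ψ g‖ = 1 := fun g => by simp [hω, ψ.norm_apply]
  have hn2 : ∀ g, ‖(ω * ψ g) ^ 2‖ = 1 := fun g => by rw [norm_pow, hn, one_pow]
  have e : ∀ g, (ω * ψ g).re ^ 4 =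
      3 / 8 + (ω ^ 2 * (ψ ^ 2) g).re / 2 + (ω ^ 4 * (ψ ^ 4) g).re / 8 := by
    intro g
    have a := re_sq_eq _ (hn g)
    have b := re_sq_eq _ (hn2 g)
    have c1 : ω ^ 2 * (ψ ^ 2) g = (ω * ψ g) ^ 2 := by rw [AddChar.pow_apply, mul_pow]
    have c2 : ω ^ 4 * (ψ ^ 4) g = ((ω * ψ g) ^ 2) ^ 2 := by
      rw [AddChar.pow_apply]; ring
    rw [c1, c2]
    have : (ω * ψ g).re ^ 4 = ((ω * ψ g).re ^ 2) ^ 2 := by ring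
    rw [this, a]
    linear_combination b / 4
  simp only [e, Finset.sum_add_distrib, ← Finset.sum_div, sum_re_mul _ h2, sum_re_mul _ h4]
  simp; ring

/-- The even quartic through `(1, 1)` that touches `|y|` at `y = ±1/2`. Its average against the
uniform measure on the unit circle, with `y = Re z`, is `2/3`, which characters of order `3`
and `6` show to be optimal. -/
lemma abs_le_quartic (y : ℝ) (hy : |y| ≤ 1) : |y| ≤ 2 / 9 + 11 / 9 * y ^ 2 - 4 / 9 * y ^ 4 := by
  have e2 : y ^ 2 = |y| ^ 2 := (sq_abs y).symm
  have e4 : y ^ 4 = |y| ^ 4 := (Even.pow_abs (by decide) y).symm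
  rw [e2, e4]
  have h0 := abs_nonneg y
  have : 0 ≤ (1 - |y|) * (2 * |y| - 1) ^ 2 * (|y| + 2) :=
    mul_nonneg (mul_nonneg (by linarith) (sq_nonneg _)) (by linarith)
  nlinarith

lemma exists_unit_mul_eq_norm (z : ℂ) : ∃ ω : ℂ, ‖ω‖ = 1 ∧ (ω * z).re = ‖z‖ := by
  by_cases hz : z = 0
  · exact ⟨1, by simp, by simp [hz]⟩
  · have hz' : ‖z‖ ≠ 0 := by simpa using hz
    refine ⟨conj z / ‖z‖, by simp [hz'], ?_⟩
    rw [div_mul_eq_mul_div, mul_comm, Complex.mul_conj, Complex.normSq_eq_norm_sq]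
    rw [← Complex.ofReal_div, Complex.ofReal_re]
    field_simp

/-- For a character of order other than `1`, `2`, `4`, the second and fourth moments of
`Re (ω ψ)` are those of the full circle, so `abs_le_quartic` can be averaged. -/
lemma re_mul_ft_le_third (k : α → ℝ) (h0 : ∀ g, 0 ≤ k g) (h1 : ∀ g, k g ≤ 1)
    (ψ : AddChar α ℂ) (h2 : ψ ^ 2 ≠ 1) (h4 : ψ ^ 4 ≠ 1) (ω : ℂ) (hω : ‖ω‖ = 1) :
    (ω * ft k ψ).re ≤ Fintype.card α / 3 := by
  have hψ : ψ ≠ 1 := by rintro rfl; exact h2 (one_pow 2)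
  have hn : ∀ g, ‖ω * ψ g‖ = 1 := fun g => by simp [hω, ψ.norm_apply]
  rw [re_mul_ft]
  refine (sum_mul_le_half_abs k _ h0 h1 (sum_re_mul ψ hψ ω)).trans ?_
  have : ∑ g, |(ω * ψ g).re| ≤
      ∑ g, (2 / 9 + 11 / 9 * (ω * ψ g).re ^ 2 - 4 / 9 * (ω * ψ g).re ^ 4) :=
    Finset.sum_le_sum fun g _ =>
      abs_le_quartic _ ((Complex.abs_re_le_norm _).trans (hn g).le)
  rw [Finset.sum_sub_distrib, Finset.sum_add_distrib, ← Finset.mul_sum, ← Finset.mul_sum,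
    sum_re_sq ψ h2 ω hω, sum_re_pow_four ψ h2 h4 ω hω] at this
  simp only [Finset.sum_const, Finset.card_univ, nsmul_eq_mul] at this
  linarith

/-- The optimal constant is `√2/4`, reached at order `4`; `5/12` is what makes the sum with the
`1/4` of `re_ft_le_of_pow_four` equal to `2/3`. -/
lemma norm_ft_le_of_sq_ne_one (k : α → ℝ) (h0 : ∀ g, 0 ≤ k g) (h1 : ∀ g, k g ≤ 1)
    (ψ : AddChar α ℂ) (h2 : ψ ^ 2 ≠ 1) : ‖ft k ψ‖ ≤ 5 / 12 * Fintype.card α := by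
  have hψ : ψ ≠ 1 := by rintro rfl; exact h2 (one_pow 2)
  obtain ⟨ω, hω, e⟩ := exists_unit_mul_eq_norm (ft k ψ)
  rw [← e, re_mul_ft]
  refine (sum_mul_le_half_abs k _ h0 h1 (sum_re_mul ψ hψ ω)).trans ?_
  have : ∑ g, |(ω * ψ g).re| ≤ ∑ g, (1 / 3 + (ω * ψ g).re ^ 2) :=
    Finset.sum_le_sum fun g _ => by
      rw [← sq_abs (ω * ψ g).re]; nlinarith [sq_nonneg (|(ω * ψ g).re| - 1 / 2)]
  rw [Finset.sum_add_distrib, sum_re_sq ψ h2 ω hω] at this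
  simp only [Finset.sum_const, Finset.card_univ, nsmul_eq_mul] at this
  linarith

/-- A character of order `4` has real part `0` or `±1`, so `|Re ψ| = (Re ψ)²`. -/
lemma re_ft_le_of_pow_four (k : α → ℝ) (h0 : ∀ g, 0 ≤ k g) (h1 : ∀ g, k g ≤ 1)
    (ψ : AddChar α ℂ) (h2 : ψ ^ 2 ≠ 1) (h4 : ψ ^ 4 = 1) :
    (ft k ψ).re ≤ Fintype.card α / 4 := by
  have hψ : ψ ≠ 1 := by rintro rfl; exact h2 (one_pow 2)
  have e := re_mul_ft k ψ 1
  have s := sum_re_mul ψ hψ 1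
  have q := sum_re_sq ψ h2 1 (by simp)
  simp only [one_mul] at e s q
  rw [e]
  refine (sum_mul_le_half_abs k _ h0 h1 s).trans ?_
  have habs : ∀ g, |(ψ g).re| = (ψ g).re ^ 2 := by
    intro g
    have h : (ψ g) ^ 4 = 1 := by rw [← AddChar.pow_apply, h4, AddChar.one_apply]
    have hf : (ψ g ^ 2 - 1) * (ψ g ^ 2 + 1) = 0 := by linear_combination h
    rcases mul_eq_zero.1 hf with h' | h'
    · rcases sq_eq_sq_iff_eq_or_eq_neg.1 (by rw [sub_eq_zero.1 h', one_pow] : ψ g ^ 2 = 1 ^ 2) with h'' | h'' <;> simp [h'']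
    · have : (ψ g - Complex.I) * (ψ g + Complex.I) = 0 := by
        linear_combination h' - Complex.I_sq
      rcases mul_eq_zero.1 this with h'' | h''
      · simp [sub_eq_zero.1 h'']
      · simp [eq_neg_of_add_eq_zero_left h'']
  simp only [habs, q]
  linarith

/-! ### The `2 × 2` block at a character -/

/-- The Hermitian form at `(u, v)` of the `2 × 2` block
`[[ft kR ψ, ft kT ψ], [conj (ft kT ψ), ft kS ψ]]` of the adjacency operator at the character `ψ`.
The real part makes this meaningful for weights `kR`, `kS` that are not symmetric. -/
noncomputable def fiberForm (kR kS kT : α → ℝ) (ψ : AddChar α ℂ) (u v : ℂ) : ℝ :=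
  (u * ft kR ψ * conj u + v * ft kS ψ * conj v + 2 * (u * ft kT ψ * conj v)).re

lemma fiberForm_eq (kR kS kT : α → ℝ) (ψ : AddChar α ℂ) (u v : ℂ) :
    fiberForm kR kS kT ψ u v = ‖u‖ ^ 2 * (ft kR ψ).re + ‖v‖ ^ 2 * (ft kS ψ).re +
      2 * (u * ft kT ψ * conj v).re := by
  have h : ∀ z w : ℂ, (z * w * conj z).re = ‖z‖ ^ 2 * w.re := by
    intro z w
    rw [mul_right_comm, Complex.mul_conj, Complex.re_ofReal_mul, Complex.normSq_eq_norm_sq]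
  have h2 : ∀ z : ℂ, (2 * z).re = 2 * z.re := by intro z; simp
  rw [fiberForm, Complex.add_re, Complex.add_re, h, h, h2]

lemma fiberForm_le (kR kS kT : α → ℝ) (ψ : AddChar α ℂ) (u v : ℂ) :
    fiberForm kR kS kT ψ u v ≤ ‖u‖ ^ 2 * (ft kR ψ).re + ‖v‖ ^ 2 * (ft kS ψ).re +
      2 * (‖u‖ * ‖ft kT ψ‖ * ‖v‖) := by
  rw [fiberForm_eq]
  have : (u * ft kT ψ * conj v).re ≤ ‖u‖ * ‖ft kT ψ‖ * ‖v‖ := by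
    refine (Complex.re_le_norm _).trans (le_of_eq ?_)
    simp
  linarith

/-- The block at `ψ` has no eigenvalue above `2n/3`. -/
def IsTame (kR kS kT : α → ℝ) (ψ : AddChar α ℂ) : Prop :=
  ∀ u v : ℂ, fiberForm kR kS kT ψ u v ≤ 2 * Fintype.card α / 3 * (‖u‖ ^ 2 + ‖v‖ ^ 2)

lemma isTame_of_bounds (kR kS kT : α → ℝ) (ψ : AddChar α ℂ) (a b : ℝ)
    (hR : (ft kR ψ).re ≤ a) (hS : (ft kS ψ).re ≤ a) (hT : ‖ft kT ψ‖ ≤ b)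
    (hab : a + b ≤ 2 * Fintype.card α / 3) : IsTame kR kS kT ψ := by
  intro u v
  refine (fiberForm_le kR kS kT ψ u v).trans ?_
  have hb : 0 ≤ b := (norm_nonneg _).trans hT
  have h1 : ‖u‖ ^ 2 * (ft kR ψ).re ≤ ‖u‖ ^ 2 * a := by gcongr
  have h2 : ‖v‖ ^ 2 * (ft kS ψ).re ≤ ‖v‖ ^ 2 * a := by gcongr
  have h3 : ‖u‖ * ‖ft kT ψ‖ * ‖v‖ ≤ ‖u‖ * b * ‖v‖ := by gcongr
  have h4 : (a + b) * (‖u‖ ^ 2 + ‖v‖ ^ 2) ≤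
      2 * Fintype.card α / 3 * (‖u‖ ^ 2 + ‖v‖ ^ 2) := by gcongr
  nlinarith [mul_nonneg hb (sq_nonneg (‖u‖ - ‖v‖))]

section weights
variable {kR kS kT : α → ℝ}

lemma isTame_of_sq_ne_one (hR : ∀ g, 0 ≤ kR g ∧ kR g ≤ 1) (hS : ∀ g, 0 ≤ kS g ∧ kS g ≤ 1)
    (hT : ∀ g, 0 ≤ kT g ∧ kT g ≤ 1) (ψ : AddChar α ℂ) (h2 : ψ ^ 2 ≠ 1) :
    IsTame kR kS kT ψ := by
  by_cases h4 : ψ ^ 4 = 1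
  · refine isTame_of_bounds kR kS kT ψ (Fintype.card α / 4) (5 / 12 * Fintype.card α)
      (re_ft_le_of_pow_four _ (fun g => (hR g).1) (fun g => (hR g).2) ψ h2 h4)
      (re_ft_le_of_pow_four _ (fun g => (hS g).1) (fun g => (hS g).2) ψ h2 h4)
      (norm_ft_le_of_sq_ne_one _ (fun g => (hT g).1) (fun g => (hT g).2) ψ h2) ?_
    linarith
  · have key : ∀ k : α → ℝ, (∀ g, 0 ≤ k g ∧ k g ≤ 1) → ‖ft k ψ‖ ≤ Fintype.card α / 3 := by
      intro k hk
      obtain ⟨ω, hω, e⟩ := exists_unit_mul_eq_norm (ft k ψ)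
      rw [← e]
      exact re_mul_ft_le_third k (fun g => (hk g).1) (fun g => (hk g).2) ψ h2 h4 ω hω
    refine isTame_of_bounds kR kS kT ψ _ _ ((Complex.re_le_norm _).trans (key _ hR))
      ((Complex.re_le_norm _).trans (key _ hS)) (key _ hT) ?_
    linarith

/-- If both eigenvalues of the block at the trivial character are at least `2n/3`, then `kR` and
`kS` are so heavy, and `kT` so light, that no other block has an eigenvalue above `2n/3`. -/
lemma isTame_of_trivial_posDef (hR : ∀ g, 0 ≤ kR g ∧ kR g ≤ 1) (hS : ∀ g, 0 ≤ kS g ∧ kS g ≤ 1)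
    (hT : ∀ g, 0 ≤ kT g ∧ kT g ≤ 1)
    (hpos : ∀ p q : ℝ, 2 * Fintype.card α / 3 * (p ^ 2 + q ^ 2) ≤
      p ^ 2 * ∑ g, kR g + q ^ 2 * ∑ g, kS g + 2 * (p * q * ∑ g, kT g))
    (ψ : AddChar α ℂ) (hψ : ψ ≠ 1) : IsTame kR kS kT ψ := by
  intro u v
  refine (fiberForm_le kR kS kT ψ u v).trans ?_
  have h1 := mul_le_mul_of_nonneg_left
    (re_ft_le_sub kR (fun g => (hR g).2) ψ hψ) (sq_nonneg ‖u‖)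
  have h2 := mul_le_mul_of_nonneg_left
    (re_ft_le_sub kS (fun g => (hS g).2) ψ hψ) (sq_nonneg ‖v‖)
  have h3 : ‖u‖ * ‖ft kT ψ‖ * ‖v‖ ≤ ‖u‖ * (∑ g, kT g) * ‖v‖ := by
    gcongr; exact norm_ft_le kT (fun g => (hT g).1) ψ
  -- The sign turns positivity of the trivial block into an upper bound on the cross term.
  have h4 := hpos ‖u‖ (-‖v‖)
  have h5 : 0 ≤ (Fintype.card α : ℝ) * (‖u‖ ^ 2 + ‖v‖ ^ 2) := by positivity
  nlinarith

/-- The `(0, 0)` entry of a nontrivial block is at most `n/2`, hence such a block has at most one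
eigenvalue above `2n/3`. -/
lemma fiberForm_zero_right_le (hR : ∀ g, 0 ≤ kR g ∧ kR g ≤ 1) (ψ : AddChar α ℂ) (hψ : ψ ≠ 1)
    (u : ℂ) : fiberForm kR kS kT ψ u 0 ≤ 2 * Fintype.card α / 3 * (‖u‖ ^ 2 + ‖(0 : ℂ)‖ ^ 2) := by
  rw [fiberForm_eq]
  have h1 := re_ft_le_sub kR (fun g => (hR g).2) ψ hψ
  have h2 := (Complex.re_le_norm _).trans (norm_ft_le kR (fun g => (hR g).1) ψ)
  have h3 : (ft kR ψ).re ≤ 2 * Fintype.card α / 3 := by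
    have : (0 : ℝ) ≤ Fintype.card α := by positivity
    linarith
  have := mul_le_mul_of_nonneg_left h3 (sq_nonneg ‖u‖)
  simp
  linarith

lemma real_of_sq_eq_one {α : Type} [AddCommGroup α] [Finite α] (ψ : AddChar α ℂ) (h2 : ψ ^ 2 = 1) (g : α) :
    ψ g = ((ψ g).re : ℂ) ∧ ((ψ g).re = 1 ∨ (ψ g).re = -1) := by
  have h : ψ g ^ 2 = 1 ^ 2 := by rw [← AddChar.pow_apply, h2, AddChar.one_apply, one_pow]
  rcases sq_eq_sq_iff_eq_or_eq_neg.1 h with h' | h' <;> simp [h']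

lemma ft_eq_ofReal (k : α → ℝ) (ψ : AddChar α ℂ) (h2 : ψ ^ 2 = 1) :
    ft k ψ = ((∑ g, k g * (ψ g).re : ℝ) : ℂ) := by
  rw [ft]
  push_cast
  exact Finset.sum_congr rfl fun g _ => by rw [← (real_of_sq_eq_one ψ h2 g).1]

/-- At a real character the block is real symmetric, so a violation of tameness is witnessed by a
real unit vector `(p, q)`. -/
lemma exists_real_of_not_isTame (ψ : AddChar α ℂ) (h2 : ψ ^ 2 = 1)
    (hψ : ¬ IsTame kR kS kT ψ) : ∃ p q : ℝ, p ^ 2 + q ^ 2 = 1 ∧ 2 * Fintype.card α / 3 <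
      ∑ g, kR g * (p ^ 2 * (ψ g).re) + ∑ g, kS g * (q ^ 2 * (ψ g).re) +
      2 * ∑ g, kT g * (p * q * (ψ g).re) := by
  have hform : ∃ p q : ℝ, 2 * Fintype.card α / 3 * (p ^ 2 + q ^ 2) <
      p ^ 2 * (∑ g, kR g * (ψ g).re) + q ^ 2 * (∑ g, kS g * (ψ g).re) +
      2 * (p * q * ∑ g, kT g * (ψ g).re) := by
    simp only [IsTame, not_forall, not_le] at hψ
    obtain ⟨u, v, huv⟩ := hψ
    have hle := huv.trans_le (fiberForm_le kR kS kT ψ u v)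
    rw [ft_eq_ofReal kR ψ h2, ft_eq_ofReal kS ψ h2, ft_eq_ofReal kT ψ h2, Complex.ofReal_re,
      Complex.ofReal_re, Complex.norm_real, Real.norm_eq_abs] at hle
    rcases abs_cases (∑ g, kT g * (ψ g).re) with ⟨h, _⟩ | ⟨h, _⟩ <;> rw [h] at hle
    · exact ⟨‖u‖, ‖v‖, by linarith⟩
    · exact ⟨‖u‖, -‖v‖, by nlinarith⟩
  obtain ⟨p, q, hpq⟩ := hform
  have hne : 0 < p ^ 2 + q ^ 2 := by
    rcases (add_nonneg (sq_nonneg p) (sq_nonneg q)).lt_or_eq with h | h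
    · exact h
    · have hp : p = 0 := by nlinarith [sq_nonneg p, sq_nonneg q]
      have hq : q = 0 := by nlinarith [sq_nonneg p, sq_nonneg q]
      simp [hp, hq] at hpq
  set s := Real.sqrt (p ^ 2 + q ^ 2) with hs
  have hs2 : s ^ 2 = p ^ 2 + q ^ 2 := Real.sq_sqrt hne.le
  have hs0 : s ≠ 0 := (Real.sqrt_pos.2 hne).ne'
  refine ⟨p / s, q / s, ?_, ?_⟩
  · rw [div_pow, div_pow, ← add_div, hs2, div_self hne.ne']
  · have e : ∀ (k : α → ℝ) (a : ℝ), ∑ g, k g * (a * (ψ g).re) = a * ∑ g, k g * (ψ g).re := by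
      intro k a
      rw [Finset.mul_sum]
      exact Finset.sum_congr rfl fun g _ => by ring
    rw [e, e, e, div_pow, div_pow, div_mul_div_comm, ← pow_two, hs2]
    rw [← mul_lt_mul_iff_of_pos_right hne]
    refine hpq.trans_eq ?_
    field_simp

/-- Two distinct nontrivial real characters take each of the four sign pairs equally often, so the
sum of the positive parts of `x ψ + y φ` is `(n/4)(|x + y| + |x - y|) = (n/2) max |x| |y|`. -/
lemma sum_mul_two_quadratic_le {k : α → ℝ} (hk : ∀ g, 0 ≤ k g ∧ k g ≤ 1) (ψ φ : AddChar α ℂ)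
    (hψ : ψ ≠ 1) (hφ : φ ≠ 1) (hne : ψ ≠ φ) (hψ2 : ψ ^ 2 = 1) (hφ2 : φ ^ 2 = 1) (x y : ℝ) :
    ∑ g, k g * (x * (ψ g).re) + ∑ g, k g * (y * (φ g).re) ≤
      Fintype.card α / 2 * max |x| |y| := by
  have s1 := sum_re_mul ψ hψ 1
  have s2 := sum_re_mul φ hφ 1
  have hprod : ψ * φ ≠ 1 := by
    intro h
    apply hne
    calc ψ = ψ * φ ^ 2 := by rw [hφ2, mul_one]
      _ = (ψ * φ) * φ := by rw [pow_two, mul_assoc]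
      _ = φ := by rw [h, one_mul]
  have s3 := sum_re_mul (ψ * φ) hprod 1
  simp only [one_mul] at s1 s2 s3
  have e3 : ∀ g, ((ψ * φ) g).re = (ψ g).re * (φ g).re := by
    intro g
    rw [AddChar.mul_apply, (real_of_sq_eq_one ψ hψ2 g).1, (real_of_sq_eq_one φ hφ2 g).1]
    simp
  simp only [e3] at s3
  rw [← Finset.sum_add_distrib]
  have hs : ∑ g, (x * (ψ g).re + y * (φ g).re) = 0 := by
    rw [Finset.sum_add_distrib, ← Finset.mul_sum, ← Finset.mul_sum, s1, s2]; simp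
  have := sum_mul_le_half_abs k _ (fun g => (hk g).1) (fun g => (hk g).2) hs
  simp only [← mul_add] at this ⊢
  refine this.trans ?_
  have habs : ∀ g, |x * (ψ g).re + y * (φ g).re| =
      (|x + y| + |x - y|) / 2 + (|x + y| - |x - y|) / 2 * ((ψ g).re * (φ g).re) := by
    intro g
    have n1 : |-x - y| = |x + y| := by rw [← abs_neg]; ring_nf
    have n2 : |-x + y| = |x - y| := by rw [← abs_neg]; ring_nf
    rcases (real_of_sq_eq_one ψ hψ2 g).2 with h | h <;>
      rcases (real_of_sq_eq_one φ hφ2 g).2 with h' | h' <;> rw [h, h'] <;>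
      simp only [mul_one, mul_neg, neg_neg, ← sub_eq_add_neg, n1, n2] <;> ring
  simp only [habs, Finset.sum_add_distrib, ← Finset.mul_sum, s3]
  have hmax : (|x + y| + |x - y|) / 2 ≤ max |x| |y| := by
    have h1 := le_max_left |x| |y|
    have h2 := le_max_right |x| |y|
    have a1 := abs_le.1 h1
    have a2 := abs_le.1 h2
    rcases abs_cases (x + y) with ⟨h, _⟩ | ⟨h, _⟩ <;>
      rcases abs_cases (x - y) with ⟨h', _⟩ | ⟨h', _⟩ <;> rw [h, h'] <;> linarith
  simp only [Finset.sum_const, Finset.card_univ, nsmul_eq_mul]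
  have := mul_le_mul_of_nonneg_left hmax (by positivity : (0 : ℝ) ≤ Fintype.card α)
  linarith

lemma unit_pair_bound (p q p' q' : ℝ) (h : p ^ 2 + q ^ 2 = 1) (h' : p' ^ 2 + q' ^ 2 = 1) :
    max |p ^ 2| |p' ^ 2| / 2 + max |q ^ 2| |q' ^ 2| / 2 + max |p * q| |p' * q'| ≤ 4 / 3 := by
  have key : ∀ a b : ℝ, a ^ 2 + b ^ 2 = 1 → a ^ 2 / 2 + |a * b| ≤ 5 / 6 := by
    intro a b hab
    rcases abs_cases (a * b) with ⟨e, _⟩ | ⟨e, _⟩ <;> rw [e]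
    · nlinarith [sq_nonneg (2 * a - 3 * b), sq_nonneg (a - b), sq_nonneg (3 * a - 5 * b)]
    · nlinarith [sq_nonneg (2 * a + 3 * b), sq_nonneg (a + b), sq_nonneg (3 * a + 5 * b)]
  have k1 := key p q h
  have k2 := key q p (by linarith)
  have k3 := key p' q' h'
  have k4 := key q' p' (by linarith)
  rw [mul_comm] at k2 k4
  simp only [abs_pow, sq_abs]
  rcases le_total (p ^ 2) (p' ^ 2) with hp | hp
  · rw [max_eq_right hp, max_eq_left (by linarith : q' ^ 2 ≤ q ^ 2)]
    rcases max_choice |p * q| |p' * q'| with e | e <;> rw [e] <;>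
      nlinarith [sq_nonneg p, sq_nonneg q, sq_nonneg p', sq_nonneg q']
  · rw [max_eq_left hp, max_eq_right (by linarith : q ^ 2 ≤ q' ^ 2)]
    rcases max_choice |p * q| |p' * q'| with e | e <;> rw [e] <;>
      nlinarith [sq_nonneg p, sq_nonneg q, sq_nonneg p', sq_nonneg q']

/-- At most one nontrivial character has a block with an eigenvalue above `2n/3`. -/
lemma isTame_or_isTame (hR : ∀ g, 0 ≤ kR g ∧ kR g ≤ 1) (hS : ∀ g, 0 ≤ kS g ∧ kS g ≤ 1)
    (hT : ∀ g, 0 ≤ kT g ∧ kT g ≤ 1) (ψ φ : AddChar α ℂ) (hψ : ψ ≠ 1) (hφ : φ ≠ 1)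
    (hne : ψ ≠ φ) : IsTame kR kS kT ψ ∨ IsTame kR kS kT φ := by
  by_cases hψ2 : ψ ^ 2 = 1
  swap
  · exact Or.inl (isTame_of_sq_ne_one hR hS hT ψ hψ2)
  by_cases hφ2 : φ ^ 2 = 1
  swap
  · exact Or.inr (isTame_of_sq_ne_one hR hS hT φ hφ2)
  by_contra! hbad
  obtain ⟨p, q, h, hlt⟩ := exists_real_of_not_isTame ψ hψ2 hbad.1
  obtain ⟨p', q', h', hlt'⟩ := exists_real_of_not_isTame φ hφ2 hbad.2
  have b1 := sum_mul_two_quadratic_le hR ψ φ hψ hφ hne hψ2 hφ2 (p ^ 2) (p' ^ 2)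
  have b2 := sum_mul_two_quadratic_le hS ψ φ hψ hφ hne hψ2 hφ2 (q ^ 2) (q' ^ 2)
  have b3 := sum_mul_two_quadratic_le hT ψ φ hψ hφ hne hψ2 hφ2 (p * q) (p' * q')
  have b4 := mul_le_mul_of_nonneg_left (unit_pair_bound p q p' q' h h')
    (by positivity : (0 : ℝ) ≤ Fintype.card α)
  nlinarith

end weights

/-! ### Assembling the blocks -/

lemma card_mul_sum_sq (f : α → ℝ) :
    (Fintype.card α : ℝ) * ∑ x, f x ^ 2 = ∑ ψ : AddChar α ℂ, ‖ft f ψ‖ ^ 2 := by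
  classical
  have h := sum_ft_mul f (Pi.single 0 1) f
  have hδ : ∀ ψ : AddChar α ℂ, ft (Pi.single 0 1 : α → ℝ) ψ = 1 := by
    intro ψ
    rw [ft, Finset.sum_eq_single 0]
    · simp
    · intro b _ hb; simp [hb]
    · simp
  have e : ∀ x, ∑ y, f x * (Pi.single 0 1 : α → ℝ) (y - x) * f y = f x ^ 2 := by
    intro x
    rw [Finset.sum_eq_single x]
    · simp; ring
    · intro y _ hy; simp [sub_eq_zero, hy]
    · simp
  simp only [hδ, e, mul_one, Complex.mul_conj, Complex.normSq_eq_norm_sq] at h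
  exact_mod_cast h.symm

/-- The quadratic form of the weighted semi-Cayley graph with connection weights `kR`, `kS`, `kT`,
at the function equal to `f₀` on the first and `f₁` on the second copy of the group. -/
noncomputable def blockForm (kR kS kT : α → ℝ) (f₀ f₁ : α → ℝ) : ℝ :=
  (∑ x, ∑ y, f₀ x * kR (y - x) * f₀ y) + (∑ x, ∑ y, f₁ x * kS (y - x) * f₁ y) +
    2 * ∑ x, ∑ y, f₀ x * kT (y - x) * f₁ y

lemma card_mul_blockForm (kR kS kT : α → ℝ) (f₀ f₁ : α → ℝ) :
    (Fintype.card α : ℝ) * blockForm kR kS kT f₀ f₁ =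
      ∑ ψ : AddChar α ℂ, fiberForm kR kS kT ψ (ft f₀ ψ) (ft f₁ ψ) := by
  have : ((∑ ψ : AddChar α ℂ, fiberForm kR kS kT ψ (ft f₀ ψ) (ft f₁ ψ) : ℝ)) =
      (∑ ψ : AddChar α ℂ, ft f₀ ψ * ft kR ψ * conj (ft f₀ ψ) +
        ∑ ψ : AddChar α ℂ, ft f₁ ψ * ft kS ψ * conj (ft f₁ ψ) +
        2 * ∑ ψ : AddChar α ℂ, ft f₀ ψ * ft kT ψ * conj (ft f₁ ψ)).re := by
    rw [Finset.mul_sum, ← Finset.sum_add_distrib, ← Finset.sum_add_distrib, Complex.re_sum]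
    rfl
  rw [this, sum_ft_mul, sum_ft_mul, sum_ft_mul]
  rw [← Complex.ofReal_ofNat, ← Complex.ofReal_mul, ← Complex.ofReal_add, ← Complex.ofReal_add,
    Complex.ofReal_re, blockForm]
  ring

lemma blockForm_le_of_fibers (kR kS kT : α → ℝ) (f₀ f₁ : α → ℝ) (c : ℝ)
    (h : ∀ ψ : AddChar α ℂ, fiberForm kR kS kT ψ (ft f₀ ψ) (ft f₁ ψ) ≤
      c * (‖ft f₀ ψ‖ ^ 2 + ‖ft f₁ ψ‖ ^ 2)) :
    blockForm kR kS kT f₀ f₁ ≤ c * (∑ x, f₀ x ^ 2 + ∑ x, f₁ x ^ 2) := by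
  have hn : (0 : ℝ) < Fintype.card α := by exact_mod_cast Fintype.card_pos
  refine le_of_mul_le_mul_left ?_ hn
  rw [card_mul_blockForm]
  refine (Finset.sum_le_sum fun ψ _ => h ψ).trans (le_of_eq ?_)
  rw [← Finset.mul_sum, Finset.sum_add_distrib, ← card_mul_sum_sq, ← card_mul_sum_sq]
  ring

lemma ft_one (k : α → ℝ) : ft k 1 = ((∑ g, k g : ℝ) : ℂ) := by
  simp [ft]

lemma fiberForm_one (kR kS kT : α → ℝ) (p q : ℝ) :
    fiberForm kR kS kT 1 p q =
      p ^ 2 * ∑ g, kR g + q ^ 2 * ∑ g, kS g + 2 * (p * q * ∑ g, kT g) := by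
  rw [fiberForm, ft_one, ft_one, ft_one]
  simp only [Complex.conj_ofReal]
  norm_cast
  ring

/-- Two linear conditions `(a₀, a₁)` and `(b₀, b₁)` on `(f₀, f₁)` suffice to bound the form by
`2n/3` times the squared norm. -/
lemma exists_codim_two (kR kS kT : α → ℝ) (hR : ∀ g, 0 ≤ kR g ∧ kR g ≤ 1)
    (hS : ∀ g, 0 ≤ kS g ∧ kS g ≤ 1) (hT : ∀ g, 0 ≤ kT g ∧ kT g ≤ 1) :
    ∃ a₀ a₁ b₀ b₁ : α → ℝ, ∀ f₀ f₁ : α → ℝ,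
      ∑ x, f₀ x * a₀ x + ∑ x, f₁ x * a₁ x = 0 → ∑ x, f₀ x * b₀ x + ∑ x, f₁ x * b₁ x = 0 →
      blockForm kR kS kT f₀ f₁ ≤
        2 * Fintype.card α / 3 * (∑ x, f₀ x ^ 2 + ∑ x, f₁ x ^ 2) := by
  by_cases hpos : ∀ p q : ℝ, 2 * Fintype.card α / 3 * (p ^ 2 + q ^ 2) ≤
      p ^ 2 * ∑ g, kR g + q ^ 2 * ∑ g, kS g + 2 * (p * q * ∑ g, kT g)
  -- The trivial block uses up both conditions: they kill the transforms at `1`.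
  · refine ⟨1, 0, 0, 1, fun f₀ f₁ h₀ h₁ => blockForm_le_of_fibers _ _ _ _ _ _ fun ψ => ?_⟩
    by_cases hψ : ψ = 1
    · subst hψ
      have e₀ : ∑ x, f₀ x = 0 := by simpa using h₀
      have e₁ : ∑ x, f₁ x = 0 := by simpa using h₁
      rw [ft_one f₀, ft_one f₁, e₀, e₁, fiberForm_one]
      simp
    · exact isTame_of_trivial_posDef hR hS hT hpos ψ hψ _ _
  · push Not at hpos
    obtain ⟨p, q, hpq⟩ := hpos
    have hne : 0 < p ^ 2 + q ^ 2 := by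
      rcases (add_nonneg (sq_nonneg p) (sq_nonneg q)).lt_or_eq with h | h
      · exact h
      · have hp : p = 0 := by nlinarith [sq_nonneg p, sq_nonneg q]
        have hq : q = 0 := by nlinarith [sq_nonneg p, sq_nonneg q]
        simp [hp, hq] at hpq
    -- Orthogonality to `(-q, p)` forces the transform at `1` to be a multiple of `(p, q)`.
    have htriv : ∀ f₀ f₁ : α → ℝ, ∑ x, f₀ x * (-q) + ∑ x, f₁ x * p = 0 →
        fiberForm kR kS kT 1 (ft f₀ 1) (ft f₁ 1) ≤
          2 * Fintype.card α / 3 * (‖ft f₀ 1‖ ^ 2 + ‖ft f₁ 1‖ ^ 2) := by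
      intro f₀ f₁ h
      rw [← Finset.sum_mul, ← Finset.sum_mul] at h
      rw [ft_one f₀, ft_one f₁, fiberForm_one, Complex.norm_real, Complex.norm_real,
        Real.norm_eq_abs, Real.norm_eq_abs, sq_abs, sq_abs]
      set F₀ := ∑ x, f₀ x
      set F₁ := ∑ x, f₁ x
      set t := (p * F₀ + q * F₁) / (p ^ 2 + q ^ 2) with ht
      have e₀ : F₀ = t * p := by
        rw [ht]; field_simp; linear_combination (-q) * h
      have e₁ : F₁ = t * q := by
        rw [ht]; field_simp; linear_combination p * h
      rw [e₀, e₁]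
      have := mul_le_mul_of_nonneg_left hpq.le (sq_nonneg t)
      nlinarith
    by_cases hall : ∀ ψ : AddChar α ℂ, ψ ≠ 1 → IsTame kR kS kT ψ
    · refine ⟨fun _ => -q, fun _ => p, 0, 0, fun f₀ f₁ h₀ _ =>
        blockForm_le_of_fibers _ _ _ _ _ _ fun ψ => ?_⟩
      by_cases hψ : ψ = 1
      · subst hψ
        exact htriv f₀ f₁ h₀
      · exact hall ψ hψ _ _
    · push Not at hall
      obtain ⟨χ, hχ1, hχ⟩ := hall
      have hχ2 : χ ^ 2 = 1 := by
        by_contra h2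
        exact hχ (isTame_of_sq_ne_one hR hS hT χ h2)
      -- The second condition kills the second coordinate of the transform at `χ`.
      refine ⟨fun _ => -q, fun _ => p, 0, fun x => (χ x).re, fun f₀ f₁ h₀ h₁ =>
        blockForm_le_of_fibers _ _ _ _ _ _ fun ψ => ?_⟩
      by_cases hψ : ψ = 1
      · subst hψ
        exact htriv f₀ f₁ h₀
      by_cases hψχ : ψ = χ
      · subst hψχ
        have e₁ : ft f₁ ψ = 0 := by
          have h₁' : ∑ x, f₁ x * (ψ x).re = 0 := by simpa using h₁
          rw [ft_eq_ofReal f₁ ψ hχ2, h₁', Complex.ofReal_zero]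
        rw [e₁]
        exact fiberForm_zero_right_le hR ψ hψ _
      · exact (isTame_or_isTame hR hS hT ψ χ hψ hχ1 hψχ).resolve_right hχ _ _

end Fourier

theorem stmt_7 {Γ : Type} [CommGroup Γ] [Fintype Γ] [DecidableEq Γ] (R S T : Set Γ)
    (hR : R⁻¹ = R) (hS : S⁻¹ = S) (hid : (1 : Γ) ∉ R ∪ S) (hn : 2 ≤ Fintype.card Γ) :
    graphLambda (semiCayleyGraph R S T) 3 ≤ (2 * Fintype.card Γ : ℝ) / 3 := by
  classical
  let ind : Set Γ → Additive Γ → ℝ := fun X g => if g.toMul ∈ X then 1 else 0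
  have hind : ∀ X g, 0 ≤ ind X g ∧ ind X g ≤ 1 := by
    intro X g
    simp only [ind]
    split_ifs <;> norm_num
  have hRinv : ∀ x, x⁻¹ ∈ R ↔ x ∈ R := fun x => by rw [← Set.mem_inv, hR]
  have hSinv : ∀ x, x⁻¹ ∈ S ↔ x ∈ S := fun x => by rw [← Set.mem_inv, hS]
  have h1R : (1 : Γ) ∉ R := fun h => hid (Or.inl h)
  have h1S : (1 : Γ) ∉ S := fun h => hid (Or.inr h)
  obtain ⟨a₀, a₁, b₀, b₁, hform⟩ := exists_codim_two (ind R) (ind S) (ind T)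
    (hind R) (hind S) (hind T)
  unfold graphLambda
  let _ := Classical.decRel (semiCayleyGraph R S T).Adj
  set A := (semiCayleyGraph R S T).adjMatrix ℝ with hAdef
  have hA : A.IsHermitian := SimpleGraph.isHermitian_adjMatrix ℝ _
  have hAR : ∀ x y : Γ, A (x, false) (y, false) = ind R (.ofMul y - .ofMul x) := by
    intro x y
    have hswap : x / y ∈ R ↔ y / x ∈ R := by rw [← hRinv, inv_div]
    rw [hAdef, SimpleGraph.adjMatrix_apply]
    by_cases hxy : x = y
    · subst hxy; simp [ind, h1R]
    · simp [semiCayleyGraph, ind, hxy, hswap, ← div_eq_mul_inv]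
  have hAS : ∀ x y : Γ, A (x, true) (y, true) = ind S (.ofMul y - .ofMul x) := by
    intro x y
    have hswap : x / y ∈ S ↔ y / x ∈ S := by rw [← hSinv, inv_div]
    rw [hAdef, SimpleGraph.adjMatrix_apply]
    by_cases hxy : x = y
    · subst hxy; simp [ind, h1S]
    · simp [semiCayleyGraph, ind, hxy, hswap, ← div_eq_mul_inv]
  have hAT : ∀ x y : Γ, A (x, false) (y, true) = ind T (.ofMul y - .ofMul x) := by
    intro x y
    simp [hAdef, SimpleGraph.adjMatrix_apply, semiCayleyGraph, SimpleGraph.fromRel_adj, ind,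
      ← div_eq_mul_inv]
  have hAT' : ∀ x y : Γ, A (x, true) (y, false) = ind T (.ofMul x - .ofMul y) := by
    intro x y
    rw [← hAT]
    exact hA.apply (y, false) (x, true)
  refine lambdaK_three_le hA _ (by positivity) (eigen_count_le_two hA _
    (fun v => if v.2 then a₁ (.ofMul v.1) else a₀ (.ofMul v.1))
    (fun v => if v.2 then b₁ (.ofMul v.1) else b₀ (.ofMul v.1)) ?_)
  intro f h₀ h₁
  have hsum : ∀ F : Γ × Bool → ℝ,
      ∑ v, F v = ∑ x : Additive Γ, F (x.toMul, false) + ∑ x : Additive Γ, F (x.toMul, true) := by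
    intro F
    rw [Fintype.sum_prod_type, ← Finset.sum_add_distrib]
    refine Fintype.sum_equiv Additive.ofMul _ _ fun x => ?_
    simp [add_comm]
  have hmain := hform (fun x => f (x.toMul, false)) (fun x => f (x.toMul, true))
    (by simpa [dotProduct, hsum] using h₀) (by simpa [dotProduct, hsum] using h₁)
  have hcard : Fintype.card (Additive Γ) = Fintype.card Γ := Fintype.card_congr Additive.toMul
  rw [hcard] at hmain
  have e1 : f ⬝ᵥ f = ∑ x : Additive Γ, f (x.toMul, false) ^ 2 +
      ∑ x : Additive Γ, f (x.toMul, true) ^ 2 := by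
    simp only [dotProduct, hsum, pow_two]
  have e2 : f ⬝ᵥ (A *ᵥ f) = blockForm (ind R) (ind S) (ind T)
      (fun x => f (x.toMul, false)) (fun x => f (x.toMul, true)) := by
    simp only [dotProduct, mulVec, hsum, hAR, hAS, hAT, hAT', blockForm, mul_add,
      Finset.sum_add_distrib, Finset.mul_sum, ofMul_toMul]
    have hcomm : ∑ x : Additive Γ, ∑ y : Additive Γ,
        f (x.toMul, true) * (ind T (x - y) * f (y.toMul, false)) =
        ∑ x : Additive Γ, ∑ y : Additive Γ,
          f (x.toMul, false) * (ind T (y - x) * f (y.toMul, true)) := by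
      rw [Finset.sum_comm]
      exact Finset.sum_congr rfl fun x _ => Finset.sum_congr rfl fun y _ => by ring
    rw [hcomm]
    simp only [← Finset.mul_sum, mul_assoc]
    ring
  rw [e1, e2]
  exact hmain
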